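/- arXiv:2312.07107 — 3 statements merged into one kernel-verified Lean document; each statement's English description precedes it below -/
import Mathlib

section
/- Truth lemma: For each state w of the canonical game and each formula φ ∈ Φ, w ⊨ φ if and only if φ ∈ F(w). -/
/- Language: formulas over atomic propositions P, data variables V, actors 𝒜 = A.
   `bel T X φ` is B^T_X φ ; `str C T X φ` is [C]^T_X φ. -/
inductive Formula (P V A : Type) : Type
  | atom : P → Formula P V A
  | neg : Formula P V A → Formula P V A
  | imp : Formula P V A → Formula P V A → Formula P V A
  | bel : Set V → Set V → Formula P V A → Formula P V A
  | str : Set A → Set V → Set V → Formula P V A → Formula P V A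

variable {P V A : Type}

/-- Propositional tautologies: true under every valuation respecting ¬ and →. -/
def Tautology (φ : Formula P V A) : Prop :=
  ∀ v : Formula P V A → Prop,
    (∀ ψ, v (Formula.neg ψ) ↔ ¬ v ψ) →
    (∀ ψ χ, v (Formula.imp ψ χ) ↔ (v ψ → v χ)) →
    v φ

/-- Theorems of the logical system of doxastic strategies. -/
inductive Thm : Formula P V A → Prop
  | taut {φ : Formula P V A} : Tautology φ → Thm φ
  | truth {X : Set V} {φ : Formula P V A} :
      Thm (Formula.imp (Formula.bel ∅ X φ) φ)
  | negIntro {T X : Set V} {φ : Formula P V A} :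
      Thm (Formula.imp (Formula.neg (Formula.bel T X φ))
        (Formula.bel ∅ X (Formula.neg (Formula.bel T X φ))))
  | distrib {T X : Set V} {φ ψ : Formula P V A} :
      Thm (Formula.imp (Formula.bel T X (Formula.imp φ ψ))
        (Formula.imp (Formula.bel T X φ) (Formula.bel T X ψ)))
  | trust {T X Y : Set V} {φ : Formula P V A} :
      Thm (Formula.bel T X (Formula.imp (Formula.bel T Y φ) φ))
  | monoB {T T' X X' : Set V} {φ : Formula P V A} :
      T ⊆ T' → X ⊆ X' →
      Thm (Formula.imp (Formula.bel T X φ) (Formula.bel T' X' φ))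
  | monoS {C C' : Set A} {T T' X X' : Set V} {φ : Formula P V A} :
      T ⊆ T' → X ⊆ X' → C ⊆ C' →
      Thm (Formula.imp (Formula.str C T X φ) (Formula.str C' T' X' φ))
  | coop {C D : Set A} {T X : Set V} {φ ψ : Formula P V A} :
      C ∩ D = ∅ →
      Thm (Formula.imp (Formula.str C T X (Formula.imp φ ψ))
        (Formula.imp (Formula.str D T X φ) (Formula.str (C ∪ D) T X ψ)))
  | strIntro₁ {C : Set A} {T X : Set V} {φ : Formula P V A} :
      Thm (Formula.imp (Formula.str C T X φ) (Formula.bel T X (Formula.str C T X φ)))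
  | strIntro₂ {C : Set A} {T X : Set V} {φ : Formula P V A} :
      Thm (Formula.imp (Formula.bel T X (Formula.str C T X φ)) (Formula.str C T X φ))
  | unavoid {T X Y : Set V} {φ : Formula P V A} :
      Thm (Formula.imp (Formula.bel T X (Formula.str ∅ T Y φ)) (Formula.str ∅ T X φ))
  | pub {T : Set V} {φ : Formula P V A} :
      Thm (Formula.imp (Formula.bel T ∅ φ) (Formula.str ∅ T ∅ φ))
  | mp {φ ψ : Formula P V A} : Thm (Formula.imp φ ψ) → Thm φ → Thm ψ
  | nec {φ : Formula P V A} : Thm φ → Thm (Formula.bel ∅ ∅ φ)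

/-- `Deduces F φ`: φ is derivable from F together with the theorems using only Modus Ponens. -/
inductive Deduces (F : Set (Formula P V A)) : Formula P V A → Prop
  | thm {φ : Formula P V A} : Thm φ → Deduces F φ
  | mem {φ : Formula P V A} : φ ∈ F → Deduces F φ
  | mp {φ ψ : Formula P V A} :
      Deduces F (Formula.imp φ ψ) → Deduces F φ → Deduces F ψ

def Consistent (F : Set (Formula P V A)) : Prop :=
  ¬ ∃ φ : Formula P V A, Deduces F φ ∧ Deduces F (Formula.neg φ)

def MaximalConsistent (F : Set (Formula P V A)) : Prop :=
  Consistent F ∧ ∀ G : Set (Formula P V A), Consistent G → F ⊆ G → F = G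

/-- A game. -/
structure Game (P V A : Type) : Type 1 where
  W : Type
  sim : V → W → W → Prop
  sim_equiv : ∀ x : V, Equivalence (sim x)
  trust : W → Set V
  Δ : Type
  delta_nonempty : Nonempty Δ
  M : W → (A → Δ) → W → Prop
  pi : P → Set W

/-- `w ∼_X u`. -/
def Game.simSet (G : Game P V A) (X : Set V) (w u : G.W) : Prop :=
  ∀ x ∈ X, G.sim x w u

/-- The satisfaction relation `w ⊨ φ` (as `Sat G φ w`). -/
def Sat (G : Game P V A) : Formula P V A → G.W → Prop
  | Formula.atom p, w => w ∈ G.pi p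
  | Formula.neg φ, w => ¬ Sat G φ w
  | Formula.imp φ ψ, w => Sat G φ w → Sat G ψ w
  | Formula.bel T X φ, w =>
      ∀ u : G.W, G.simSet X w u → T ⊆ G.trust u → Sat G φ u
  | Formula.str C T X φ, w =>
      ∃ s : {a : A // a ∈ C} → G.Δ,
        ∀ (u v : G.W) (δ : A → G.Δ),
          G.simSet X w u → T ⊆ G.trust u →
          (∀ (a : A) (h : a ∈ C), s ⟨a, h⟩ = δ a) →
          G.M u δ v → T ⊆ G.trust v → Sat G φ v

/- ===================== Canonical game ===================== -/

/-- One block `X_i, b_i, T_i, F_i` of a canonical state. -/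
structure Block (P V A B : Type) where
  X : Set V
  b : B
  T : Set V
  F : Set (Formula P V A)

variable {B : Type}

/-- `F(w)`: the last set of formulae of the sequence (or `F0` for the root). -/
def cF (F0 : Set (Formula P V A)) (l : List (Block P V A B)) : Set (Formula P V A) :=
  l.getLast?.elim F0 Block.F

/-- `𝒯_w = T(w)`: the last dataset of the sequence (or `T0` for the root). -/
def cTrust (T0 : Set V) (l : List (Block P V A B)) : Set V :=
  l.getLast?.elim T0 Block.T

/-- Membership of a sequence in the set of canonical states `W`. -/
inductive IsState (T0 : Set V) (F0 : Set (Formula P V A)) :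
    List (Block P V A B) → Prop
  | nil :
      (∀ (Y : Set V) (ψ : Formula P V A),
        Formula.imp (Formula.bel T0 Y ψ) ψ ∈ F0) →
      IsState T0 F0 []
  | snoc {l : List (Block P V A B)} {bl : Block P V A B} :
      IsState T0 F0 l →
      MaximalConsistent bl.F →
      (∀ φ : Formula P V A, Formula.bel ∅ bl.X φ ∈ cF F0 l → φ ∈ bl.F) →
      (∀ (Y : Set V) (ψ : Formula P V A),
        Formula.imp (Formula.bel bl.T Y ψ) ψ ∈ bl.F) →
      IsState T0 F0 (l ++ [bl])

/-- The canonical states. -/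
def CState (T0 : Set V) (F0 : Set (Formula P V A)) (B : Type) : Type :=
  {l : List (Block P V A B) // IsState T0 F0 l}

attribute [local instance] Classical.propDecidable

/-- Length of the longest common prefix of two sequences. -/
noncomputable def cpl {α : Type} : List α → List α → Nat
  | a :: as, b :: bs => if a = b then cpl as bs + 1 else 0
  | _, _ => 0

/-- The blocks labelling the edges on the unique simple path between two
nodes of the canonical tree. -/
noncomputable def pathBlocks (w u : List (Block P V A B)) : List (Block P V A B) :=
  w.drop (cpl w u) ++ u.drop (cpl w u)

/-- `w ∼_x u` in the canonical game: every edge along the unique simple path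
between `w` and `u` is labelled with `x`. -/
def csimVar (x : V) (w u : List (Block P V A B)) : Prop :=
  ∀ bl ∈ pathBlocks w u, x ∈ bl.X

/-- `w ∼_X u` in the canonical game. -/
def csim (X : Set V) (w u : List (Block P V A B)) : Prop :=
  ∀ x ∈ X, csimVar x w u

/-- The canonical mechanism `M`. -/
def Mech (T0 : Set V) (F0 : Set (Formula P V A))
    (w : CState T0 F0 B) (δ : A → Formula P V A × CState T0 F0 B)
    (v : CState T0 F0 B) : Prop :=
  ∀ (C : Set A) (T X : Set V) (φ : Formula P V A),
    Formula.str C T X φ ∈ cF F0 w.1 →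
    (∀ a ∈ C, (δ a).1 = φ) →
    (∀ a ∈ C, csim X w.1 (δ a).2.1) →
    T ⊆ cTrust T0 w.1 → T ⊆ cTrust T0 v.1 →
    φ ∈ cF F0 v.1

/-- Satisfaction `w ⊨ φ` on the canonical game (as `CSat T0 F0 φ w`). -/
def CSat (T0 : Set V) (F0 : Set (Formula P V A)) :
    Formula P V A → CState T0 F0 B → Prop
  | Formula.atom p, w => Formula.atom p ∈ cF F0 w.1
  | Formula.neg φ, w => ¬ CSat T0 F0 φ w
  | Formula.imp φ ψ, w => CSat T0 F0 φ w → CSat T0 F0 ψ w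
  | Formula.bel T X φ, w =>
      ∀ u : CState T0 F0 B, csim X w.1 u.1 → T ⊆ cTrust T0 u.1 → CSat T0 F0 φ u
  | Formula.str C T X φ, w =>
      ∃ s : {a : A // a ∈ C} → Formula P V A × CState T0 F0 B,
        ∀ (u v : CState T0 F0 B) (δ : A → Formula P V A × CState T0 F0 B),
          csim X w.1 u.1 → T ⊆ cTrust T0 u.1 →
          (∀ (a : A) (h : a ∈ C), s ⟨a, h⟩ = δ a) →
          Mech T0 F0 u δ v → T ⊆ cTrust T0 v.1 → CSat T0 F0 φ v

/- ===================== Harmony ===================== -/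

/-- Conjunction definable from ¬ and →. -/
def fand (φ ψ : Formula P V A) : Formula P V A :=
  Formula.neg (Formula.imp φ (Formula.neg ψ))

/-- A canonical tautology (verum). -/
noncomputable def verum (P V A : Type) [Nonempty (Formula P V A)] : Formula P V A :=
  Formula.imp (Classical.arbitrary (Formula P V A)) (Classical.arbitrary (Formula P V A))

/-- Conjunction of a finite list of formulae. -/
noncomputable def conjList [Nonempty (Formula P V A)] :
    List (Formula P V A) → Formula P V A
  | [] => verum P V A
  | φ :: l => fand φ (conjList l)

/-- The pair `(F, G)` is in `T`-harmony: `F ⊬ [∅]^T_V ¬⋀G'` for each finite `G' ⊆ G`. -/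
def THarmony [Nonempty (Formula P V A)] (T : Set V)
    (F G : Set (Formula P V A)) : Prop :=
  ∀ l : List (Formula P V A), (∀ ψ ∈ l, ψ ∈ G) →
    ¬ Deduces F (Formula.str ∅ T (Set.univ : Set V) (Formula.neg (conjList l)))

/-!
The proof is by induction on `φ`; the modal cases need states refuting a formula outside `F(w)`.

If `B^T_X φ ∉ F(w)`, extend `{ψ | B^T_X ψ ∈ F(w)}` to a maximal consistent set without `φ` and
append it to `w` as a new block. Conversely, beliefs given `X` are constant along edges
labelled with `X`, by positive and negative introspection.

If `[C]^T_X φ ∉ F(w)` and an action profile is fixed, let `S` be the set of `ψ` for which the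
members of `C` voting for `ψ` can already enforce `ψ`. There is a maximal consistent
`G ⊇ {ψ | B^T_X ψ ∈ F(w)}` containing no `[∅]^T_V (χ → φ)` with `S ⊢ χ`: these formulae form a
directed family, and otherwise Cooperation of the disjoint groups of voters yields
`[C]^T_X φ ∈ F(w)`. Hence `{ψ | [∅]^T_V ψ ∈ G} ∪ S` extends to a maximal consistent `H` without
`φ`. Appending `G` and then `H` to `w` gives a transition that refutes `[C]^T_X φ`, provided that
the tag `b` of the block of `G` occurs in no action of the profile: then the votes count at `G`
only for strategies whose dataset lies in `X`. Such a tag exists because `ℬ` is larger than `𝒜`.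
-/

section

open Formula Function

section Propositional

variable {φ ψ χ : Formula P V A}

theorem Thm.imp_self : Thm (imp φ φ) :=
  .taut fun _ _ hi => by simp only [hi]; tauto

theorem Thm.imp_intro : Thm (imp φ (imp ψ φ)) :=
  .taut fun _ _ hi => by simp only [hi]; tauto

theorem Thm.imp_distrib : Thm (imp (imp φ (imp ψ χ)) (imp (imp φ ψ) (imp φ χ))) :=
  .taut fun _ _ hi => by simp only [hi]; tauto

theorem Thm.absurd : Thm (imp φ (imp (neg φ) ψ)) :=
  .taut fun _ hn hi => by simp only [hn, hi]; tauto

theorem Thm.by_cases : Thm (imp (imp φ ψ) (imp (imp (neg φ) ψ) ψ)) :=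
  .taut fun _ hn hi => by simp only [hn, hi]; tauto

theorem Thm.neg_imp_comm : Thm (imp (imp (neg φ) ψ) (imp (neg ψ) φ)) :=
  .taut fun _ hn hi => by simp only [hn, hi]; tauto

theorem Thm.imp_neg_comm : Thm (imp (imp φ (neg ψ)) (imp ψ (neg φ))) :=
  .taut fun _ hn hi => by simp only [hn, hi]; tauto

theorem Thm.fand_intro : Thm (imp φ (imp ψ (fand φ ψ))) :=
  .taut fun _ hn hi => by simp only [fand, hn, hi]; tauto

theorem Thm.imp_fand_imp_left : Thm (imp (imp φ χ) (imp (fand φ ψ) χ)) :=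
  .taut fun _ hn hi => by simp only [fand, hn, hi]; tauto

theorem Thm.imp_fand_imp_right : Thm (imp (imp ψ χ) (imp (fand φ ψ) χ)) :=
  .taut fun _ hn hi => by simp only [fand, hn, hi]; tauto

theorem Thm.imp_trans (h₁ : Thm (imp φ ψ)) (h₂ : Thm (imp ψ χ)) : Thm (imp φ χ) :=
  .mp (.mp .imp_distrib (.mp .imp_intro h₂)) h₁

end Propositional

section Modal

variable {C : Set A} {T X : Set V} {φ ψ : Formula P V A}

theorem Thm.bel_intro (h : Thm φ) : Thm (bel T X φ) :=
  .mp (.monoB T.empty_subset X.empty_subset) (.nec h)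

theorem Thm.bel_imp_bel_bel : Thm (imp (bel T X φ) (bel ∅ X (bel T X φ))) :=
  have consistent : Thm (imp (bel T X φ) (neg (bel ∅ X (neg (bel T X φ))))) :=
    .mp .imp_neg_comm .truth
  have dual : Thm (imp (neg (bel ∅ X (neg (bel T X φ)))) (bel T X φ)) :=
    .mp .neg_imp_comm .negIntro
  (consistent.imp_trans .negIntro).imp_trans (.mp .distrib dual.bel_intro)

theorem Thm.bel_empty_imp_str_empty : Thm (imp (bel T ∅ φ) (str (∅ : Set A) T X φ)) :=
  .imp_trans .pub (.monoS subset_rfl X.empty_subset subset_rfl)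

theorem Thm.str_empty_intro (h : Thm φ) : Thm (str (∅ : Set A) T X φ) :=
  .mp .bel_empty_imp_str_empty h.bel_intro

theorem Thm.str_imp_str (h : Thm (imp φ ψ)) : Thm (imp (str C T X φ) (str C T X ψ)) := by
  simpa only [Set.empty_union] using Thm.mp (.coop (Set.empty_inter C)) h.str_empty_intro

end Modal

namespace Deduces

variable {F G K S : Set (Formula P V A)} {φ ψ χ : Formula P V A}

theorem of_thm_imp (h : Thm (imp φ ψ)) (hφ : Deduces F φ) : Deduces F ψ :=
  .mp (.thm h) hφ

theorem imp_trans (h₁ : Deduces F (imp φ ψ)) (h₂ : Deduces F (imp ψ χ)) :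
    Deduces F (imp φ χ) :=
  .mp (.of_thm_imp .imp_distrib (.of_thm_imp .imp_intro h₂)) h₁

theorem cut (hG : ∀ ψ ∈ F, Deduces G ψ) (h : Deduces F φ) : Deduces G φ := by
  induction h with
  | thm h => exact .thm h
  | mem h => exact hG _ h
  | mp _ _ ih₁ ih₂ => exact .mp ih₁ ih₂

theorem mono (hFG : F ⊆ G) (h : Deduces F φ) : Deduces G φ :=
  h.cut fun _ hψ => .mem (hFG hψ)

theorem thm_of_empty (h : Deduces ∅ φ) : Thm φ := by
  induction h with
  | thm h => exact h
  | mem h => exact h.elim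
  | mp _ _ ih₁ ih₂ => exact .mp ih₁ ih₂

theorem exists_finite_subset (h : Deduces F φ) : ∃ s ⊆ F, s.Finite ∧ Deduces s φ := by
  induction h with
  | thm h => exact ⟨∅, F.empty_subset, Set.finite_empty, .thm h⟩
  | @mem φ h => exact ⟨{φ}, Set.singleton_subset_iff.2 h, Set.finite_singleton φ, .mem rfl⟩
  | mp _ _ ih₁ ih₂ =>
    obtain ⟨s, hsF, hs, h₁⟩ := ih₁
    obtain ⟨t, htF, ht, h₂⟩ := ih₂
    exact ⟨s ∪ t, Set.union_subset hsF htF, hs.union ht,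
      .mp (h₁.mono Set.subset_union_left) (h₂.mono Set.subset_union_right)⟩

theorem imp_of_insert (h : Deduces (insert ψ F) φ) : Deduces F (imp ψ φ) := by
  induction h with
  | thm h => exact .of_thm_imp .imp_intro (.thm h)
  | mem h =>
    rcases h with rfl | h
    · exact .thm .imp_self
    · exact .of_thm_imp .imp_intro (.mem h)
  | mp _ _ ih₁ ih₂ => exact .mp (.of_thm_imp .imp_distrib ih₁) ih₂

theorem exists_deduces_imp_of_union (h : Deduces (K ∪ S) φ) :
    ∃ χ, Deduces S χ ∧ Deduces K (imp χ φ) := by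
  induction h with
  | @thm φ h => exact ⟨φ, .thm h, .thm .imp_self⟩
  | @mem φ h =>
    rcases h with hK | hS
    · exact ⟨imp φ φ, .thm .imp_self, .of_thm_imp .imp_intro (.mem hK)⟩
    · exact ⟨φ, .mem hS, .thm .imp_self⟩
  | mp _ _ ih₁ ih₂ =>
    obtain ⟨χ₁, hS₁, hK₁⟩ := ih₁
    obtain ⟨χ₂, hS₂, hK₂⟩ := ih₂
    exact ⟨fand χ₁ χ₂, .mp (.of_thm_imp .fand_intro hS₁) hS₂,
      .mp (.of_thm_imp .imp_distrib (.of_thm_imp .imp_fand_imp_left hK₁))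
        (.of_thm_imp .imp_fand_imp_right hK₂)⟩

theorem exists_mem_of_sUnion {c : Set (Set (Formula P V A))} (hc : IsChain (· ⊆ ·) c)
    (hne : c.Nonempty) (h : Deduces (⋃₀ c) φ) : ∃ s ∈ c, Deduces s φ := by
  obtain ⟨t, htc, ht, hφ⟩ := h.exists_finite_subset
  obtain ⟨s, hs, hts⟩ := hc.directedOn.exists_mem_subset_of_finite_of_subset_sUnion hne ht htc
  exact ⟨s, hs, hφ.mono hts⟩

end Deduces

theorem not_consistent_of_mem_of_neg_mem {F : Set (Formula P V A)} {φ : Formula P V A}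
    (h : φ ∈ F) (hn : neg φ ∈ F) : ¬ Consistent F :=
  fun hF => hF ⟨φ, .mem h, .mem hn⟩

theorem consistent_of_not_deduces {F : Set (Formula P V A)} {φ : Formula P V A}
    (h : ¬ Deduces F φ) : Consistent F :=
  fun ⟨_, hψ, hn⟩ => h (.mp (.of_thm_imp .absurd hψ) hn)

namespace MaximalConsistent

variable {F G : Set (Formula P V A)} {φ ψ : Formula P V A} {C : Set A} {T X : Set V}

theorem mem_of_deduces (hF : MaximalConsistent F) (h : Deduces F φ) : φ ∈ F := by
  have hcut : ∀ ψ ∈ insert φ F, Deduces F ψ :=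
    Set.forall_mem_insert.2 ⟨h, fun _ => .mem⟩
  have hcons : Consistent (insert φ F) :=
    fun ⟨ψ, hψ, hn⟩ => hF.1 ⟨ψ, hψ.cut hcut, hn.cut hcut⟩
  exact hF.2 _ hcons (F.subset_insert φ) ▸ F.mem_insert φ

theorem mem_of_thm (hF : MaximalConsistent F) (h : Thm φ) : φ ∈ F :=
  hF.mem_of_deduces (.thm h)

theorem mp_mem (hF : MaximalConsistent F) (h : imp φ ψ ∈ F) (hφ : φ ∈ F) : ψ ∈ F :=
  hF.mem_of_deduces (.mp (.mem h) (.mem hφ))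

theorem mem_of_thm_imp (hF : MaximalConsistent F) (h : Thm (imp φ ψ)) (hφ : φ ∈ F) : ψ ∈ F :=
  hF.mp_mem (hF.mem_of_thm h) hφ

theorem neg_mem_iff (hF : MaximalConsistent F) : neg φ ∈ F ↔ φ ∉ F := by
  refine ⟨fun hn h => not_consistent_of_mem_of_neg_mem h hn hF.1, fun h => ?_⟩
  have hinsert : Deduces (insert φ F) (neg φ) := by
    by_contra hd
    exact h (hF.2 _ (consistent_of_not_deduces hd) (F.subset_insert φ) ▸ F.mem_insert φ)
  exact hF.mem_of_deduces (.mp (.of_thm_imp .by_cases hinsert.imp_of_insert) (.thm .imp_self))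

theorem imp_mem_iff (hF : MaximalConsistent F) : imp φ ψ ∈ F ↔ (φ ∈ F → ψ ∈ F) := by
  refine ⟨hF.mp_mem, fun h => hF.mem_of_deduces (.imp_of_insert ?_)⟩
  by_cases hφ : φ ∈ F
  · exact .mem (Or.inr (h hφ))
  · exact .mp (.of_thm_imp .absurd (.mem (Or.inl rfl))) (.mem (Or.inr (hF.neg_mem_iff.2 hφ)))

theorem of_forall_mem_or_neg_mem (hF : Consistent F) (h : ∀ φ, φ ∈ F ∨ neg φ ∈ F) :
    MaximalConsistent F :=
  ⟨hF, fun _ hG hFG => hFG.antisymm fun φ hφ =>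
    (h φ).resolve_right fun hn => not_consistent_of_mem_of_neg_mem hφ (hFG hn) hG⟩

theorem of_maximal_not_deduces {R : Set (Formula P V A)} (hne : R.Nonempty)
    (hR : DirectedOn (fun χ χ' => Thm (imp χ χ')) R)
    (hF : Maximal (fun G => ∀ χ ∈ R, ¬ Deduces G χ) F) : MaximalConsistent F := by
  have hrefute : ∀ φ ∉ F, ∃ χ ∈ R, Deduces F (imp φ χ) := by
    intro φ hφ
    by_contra! hn
    have hinsert : ∀ χ ∈ R, ¬ Deduces (insert φ F) χ := fun χ hχ hd => hn χ hχ hd.imp_of_insert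
    exact hφ (hF.le_of_ge hinsert (F.subset_insert φ) (F.mem_insert φ))
  obtain ⟨χ₀, hχ₀⟩ := hne
  refine of_forall_mem_or_neg_mem (consistent_of_not_deduces (hF.prop χ₀ hχ₀)) fun φ => ?_
  by_contra! hφ
  obtain ⟨χ₁, hχ₁, hpos⟩ := hrefute φ hφ.1
  obtain ⟨χ₂, hχ₂, hneg⟩ := hrefute (neg φ) hφ.2
  obtain ⟨χ, hχ, h₁, h₂⟩ := hR χ₁ hχ₁ χ₂ hχ₂
  exact hF.prop χ hχ (.mp (.of_thm_imp .by_cases (hpos.imp_trans (.thm h₁)))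
    (hneg.imp_trans (.thm h₂)))

theorem exists_superset_forall_notMem {N R : Set (Formula P V A)} (hne : R.Nonempty)
    (hR : DirectedOn (fun χ χ' => Thm (imp χ χ')) R) (hN : ∀ χ ∈ R, ¬ Deduces N χ) :
    ∃ G, MaximalConsistent G ∧ N ⊆ G ∧ ∀ χ ∈ R, χ ∉ G := by
  obtain ⟨G, hNG, hG⟩ := zorn_subset_nonempty {G | ∀ χ ∈ R, ¬ Deduces G χ}
    (fun c hcR hc hcne => ⟨⋃₀ c, fun χ hχ hd =>
      let ⟨s, hs, hd'⟩ := hd.exists_mem_of_sUnion hc hcne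
      hcR hs χ hχ hd', fun _ => Set.subset_sUnion_of_mem⟩) N hN
  exact ⟨G, of_maximal_not_deduces hne hR hG, hNG, fun χ hχ hmem => hG.prop χ hχ (.mem hmem)⟩

theorem exists_superset_notMem {N : Set (Formula P V A)} (hN : ¬ Deduces N φ) :
    ∃ G, MaximalConsistent G ∧ N ⊆ G ∧ φ ∉ G := by
  have hdir : DirectedOn (fun χ χ' => Thm (imp χ χ')) {φ} := by
    rintro _ rfl _ rfl
    exact ⟨_, rfl, .imp_self, .imp_self⟩
  simpa using exists_superset_forall_notMem (Set.singleton_nonempty φ) hdir (by simpa using hN)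

theorem bel_mem_of_deduces (hF : MaximalConsistent F) (h : Deduces {ψ | bel T X ψ ∈ F} φ) :
    bel T X φ ∈ F := by
  induction h with
  | thm h => exact hF.mem_of_thm h.bel_intro
  | mem h => exact h
  | mp _ _ ih₁ ih₂ => exact hF.mp_mem (hF.mem_of_thm_imp .distrib ih₁) ih₂

theorem exists_of_bel_notMem (hF : MaximalConsistent F) (h : bel T X φ ∉ F) :
    ∃ G, MaximalConsistent G ∧ {ψ | bel T X ψ ∈ F} ⊆ G ∧ φ ∉ G :=
  exists_superset_notMem (mt hF.bel_mem_of_deduces h)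

theorem bel_mem_iff_of_subset (hF : MaximalConsistent F) (hG : MaximalConsistent G) {Y : Set V}
    (hXY : X ⊆ Y) (hFG : {ψ | bel ∅ Y ψ ∈ F} ⊆ G) : bel T X φ ∈ F ↔ bel T X φ ∈ G := by
  have transfer {ψ : Formula P V A} (h : bel ∅ X ψ ∈ F) : ψ ∈ G :=
    hFG (hF.mem_of_thm_imp (.monoB subset_rfl hXY) h)
  refine ⟨fun h => transfer (hF.mem_of_thm_imp .bel_imp_bel_bel h), fun h => ?_⟩
  by_contra hn
  exact hG.neg_mem_iff.1 (transfer (hF.mem_of_thm_imp .negIntro (hF.neg_mem_iff.2 hn))) h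

theorem str_mem_of_str_mem_of_bel_subset (hF : MaximalConsistent F) (hG : MaximalConsistent G)
    (hFG : {ψ | bel T X ψ ∈ F} ⊆ G) (h : str C T X φ ∈ G) : str C T X φ ∈ F := by
  have hFG' : {ψ | bel ∅ X ψ ∈ F} ⊆ G :=
    fun ψ hψ => hFG (hF.mem_of_thm_imp (.monoB T.empty_subset subset_rfl) hψ)
  exact hF.mem_of_thm_imp .strIntro₂
    ((hF.bel_mem_iff_of_subset hG subset_rfl hFG').2 (hG.mem_of_thm_imp .strIntro₁ h))

section Cooperation

variable {D : Formula P V A → Set A}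

theorem str_biUnion_mem_of_deduces (hF : MaximalConsistent F) (hD : Pairwise (Disjoint on D))
    {s : Set (Formula P V A)} (hs : s.Finite) (hsF : ∀ ψ ∈ s, str (D ψ) T X ψ ∈ F)
    (h : Deduces s φ) : str (⋃ ψ ∈ s, D ψ) T X φ ∈ F := by
  induction s, hs using Set.Finite.induction_on generalizing φ with
  | empty => simpa using hF.mem_of_thm h.thm_of_empty.str_empty_intro
  | @insert ψ s hψ _ ih =>
    obtain ⟨hψF, hsF⟩ := Set.forall_mem_insert.1 hsF
    have hdisj : (⋃ χ ∈ s, D χ) ∩ D ψ = ∅ := by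
      rw [← Set.disjoint_iff_inter_eq_empty, Set.disjoint_iUnion₂_left]
      exact fun χ hχ => hD (ne_of_mem_of_not_mem hχ hψ)
    rw [Set.biUnion_insert, Set.union_comm]
    exact hF.mp_mem (hF.mem_of_thm_imp (.coop hdisj) (ih hsF h.imp_of_insert)) hψF

theorem str_iUnion_mem_of_deduces (hF : MaximalConsistent F) (hD : Pairwise (Disjoint on D))
    (h : Deduces {ψ | str (D ψ) T X ψ ∈ F} φ) : str (⋃ ψ, D ψ) T X φ ∈ F := by
  obtain ⟨s, hsF, hs, hφ⟩ := h.exists_finite_subset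
  exact hF.mem_of_thm_imp (.monoS subset_rfl subset_rfl (Set.iUnion₂_subset_iUnion _ _))
    (hF.str_biUnion_mem_of_deduces hD hs hsF hφ)

theorem str_empty_mem_of_deduces (hF : MaximalConsistent F)
    (h : Deduces {ψ | str (∅ : Set A) T X ψ ∈ F} φ) : str (∅ : Set A) T X φ ∈ F := by
  simpa only [Set.iUnion_empty] using
    hF.str_iUnion_mem_of_deduces (D := fun _ => ∅) (fun _ _ _ => Set.disjoint_empty _) h

theorem str_mem_of_deduces_of_bel_deduces (hF : MaximalConsistent F)
    (hD : Pairwise (Disjoint on D)) (hDC : ∀ ψ, D ψ ⊆ C) {Y : Set V}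
    (hψ : Deduces {χ | str (D χ) T X χ ∈ F} ψ)
    (h : Deduces {χ | bel T X χ ∈ F} (str (∅ : Set A) T Y (imp ψ φ))) : str C T X φ ∈ F := by
  have himp : str ∅ T X (imp ψ φ) ∈ F := hF.mem_of_thm_imp .unavoid (hF.bel_mem_of_deduces h)
  have hcoop := hF.mp_mem (hF.mem_of_thm_imp (.coop (Set.empty_inter _)) himp)
    (hF.str_iUnion_mem_of_deduces hD hψ)
  exact hF.mem_of_thm_imp
    (.monoS subset_rfl subset_rfl (Set.union_subset C.empty_subset (Set.iUnion_subset hDC))) hcoop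

theorem directedOn_str_imp (S : Set (Formula P V A)) (C : Set A) (T X : Set V)
    (φ : Formula P V A) :
    DirectedOn (fun χ χ' => Thm (imp χ χ'))
      ((fun ψ => str C T X (imp ψ φ)) '' {ψ | Deduces S ψ}) := by
  rintro _ ⟨ψ₁, h₁, rfl⟩ _ ⟨ψ₂, h₂, rfl⟩
  exact ⟨_, ⟨fand ψ₁ ψ₂, .mp (.of_thm_imp .fand_intro h₁) h₂, rfl⟩,
    Thm.imp_fand_imp_left.str_imp_str, Thm.imp_fand_imp_right.str_imp_str⟩

theorem exists_pair_of_str_notMem (hF : MaximalConsistent F) (h : str C T X φ ∉ F)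
    (hD : Pairwise (Disjoint on D)) (hDC : ∀ ψ, D ψ ⊆ C) :
    ∃ G H, MaximalConsistent G ∧ MaximalConsistent H ∧ {ψ | bel T X ψ ∈ F} ⊆ G ∧
      {ψ | str ∅ T Set.univ ψ ∈ G} ⊆ H ∧ {ψ | str (D ψ) T X ψ ∈ G} ⊆ H ∧ φ ∉ H := by
  set S := {ψ | str (D ψ) T X ψ ∈ F}
  obtain ⟨G, hG, hFG, havoid⟩ := exists_superset_forall_notMem (N := {ψ | bel T X ψ ∈ F})
    ((show Set.Nonempty {ψ | Deduces S ψ} from ⟨imp φ φ, .thm .imp_self⟩).image _)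
    (directedOn_str_imp S ∅ T Set.univ φ)
    (Set.forall_mem_image.2 fun ψ hψ hd =>
      h (hF.str_mem_of_deduces_of_bel_deduces hD hDC hψ hd))
  have hφ : ¬ Deduces ({ψ | str ∅ T Set.univ ψ ∈ G} ∪ S) φ := by
    intro hd
    obtain ⟨χ, hχ, himp⟩ := hd.exists_deduces_imp_of_union
    exact havoid _ ⟨χ, hχ, rfl⟩ (hG.str_empty_mem_of_deduces himp)
  obtain ⟨H, hH, hsub, hφH⟩ := exists_superset_notMem hφ
  obtain ⟨hGH, hSH⟩ := Set.union_subset_iff.1 hsub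
  exact ⟨G, H, hG, hH, hFG, hGH,
    fun ψ hψ => hSH (hF.str_mem_of_str_mem_of_bel_subset hG hFG hψ), hφH⟩

end Cooperation

end MaximalConsistent

section Tree

theorem cpl_comm {α : Type} (l t : List α) : cpl l t = cpl t l := by
  induction l generalizing t with
  | nil => cases t <;> simp [cpl]
  | cons a l ih =>
    cases t with
    | nil => simp [cpl]
    | cons b t => simp only [cpl, ih t, eq_comm]

theorem cpl_append_right {α : Type} (l t : List α) : cpl l (l ++ t) = l.length := by
  induction l with
  | nil => cases t <;> simp [cpl]
  | cons a l ih => simp [cpl, ih]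

theorem take_cpl {α : Type} (l t : List α) : l.take (cpl l t) = t.take (cpl l t) := by
  induction l generalizing t with
  | nil => cases t <;> simp [cpl]
  | cons a l ih =>
    cases t with
    | nil => simp [cpl]
    | cons b t => by_cases h : a = b <;> simp [cpl, h, ih t]

variable {X : Set V} {w u : List (Block P V A B)} {bl : Block P V A B}

theorem exists_append_eq_pathBlocks (w u : List (Block P V A B)) :
    ∃ c d e, w = c ++ d ∧ u = c ++ e ∧ pathBlocks w u = d ++ e :=
  ⟨w.take (cpl w u), w.drop (cpl w u), u.drop (cpl w u), (w.take_append_drop _).symm,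
    by rw [take_cpl, List.take_append_drop], rfl⟩

theorem mem_pathBlocks_of_not_prefix (h : ¬ w ++ [bl] <+: u) :
    bl ∈ pathBlocks (w ++ [bl]) u := by
  obtain ⟨c, d, e, hw, rfl, hpath⟩ := exists_append_eq_pathBlocks (w ++ [bl]) u
  rw [hpath, List.mem_append]
  left
  rcases d.eq_nil_or_concat with rfl | ⟨d, bl', rfl⟩
  · exact absurd ⟨e, by simp [hw]⟩ h
  · rw [List.concat_eq_append, ← List.append_assoc] at hw
    obtain rfl : bl = bl' := by simpa using (List.append_inj' hw rfl).2
    simp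

theorem csim_iff : csim X w u ↔ ∀ bl ∈ pathBlocks w u, X ⊆ bl.X :=
  ⟨fun h bl hbl x hx => h x hx bl hbl, fun h _ hx bl hbl => h bl hbl hx⟩

theorem csim_symm (h : csim X w u) : csim X u w := by
  rw [csim_iff, pathBlocks, List.forall_mem_append] at h ⊢
  rw [cpl_comm u w]
  exact h.symm

theorem csim_append_singleton (h : X ⊆ bl.X) : csim X w (w ++ [bl]) := by
  simpa [csim_iff, pathBlocks, cpl_append_right] using h

theorem exists_forall_not_prefix (hAB : Cardinal.mk A < Cardinal.mk B) {α : Type} {f : B → α}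
    (hf : f.Injective) (l : List α) (t : A → List α) : ∃ b, ∀ a, ¬ l ++ [f b] <+: t a := by
  by_contra! h
  choose g hg using h
  refine (Cardinal.mk_le_of_injective (f := g) fun b b' hbb => hf ?_).not_gt hAB
  have hprefix : l ++ [f b] <+: l ++ [f b'] :=
    List.prefix_of_prefix_length_le (hbb ▸ hg b) (hg b') (by simp)
  simpa using hprefix.eq_of_length (by simp)

end Tree

section CanonicalStates

variable {T0 : Set V} {F0 : Set (Formula P V A)} {w u : List (Block P V A B)} {bl : Block P V A B}
  {T X : Set V} {φ : Formula P V A}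

theorem cF_append_singleton : cF F0 (w ++ [bl]) = bl.F := by simp [cF]

theorem cTrust_append_singleton : cTrust T0 (w ++ [bl]) = bl.T := by simp [cTrust]

theorem isState_append_singleton_iff : IsState T0 F0 (w ++ [bl]) ↔
    IsState T0 F0 w ∧ MaximalConsistent bl.F ∧ {φ | bel ∅ bl.X φ ∈ cF F0 w} ⊆ bl.F ∧
      ∀ Y ψ, imp (bel bl.T Y ψ) ψ ∈ bl.F := by
  refine ⟨fun h => ?_, fun ⟨hw, hF, hbel, htrust⟩ => .snoc hw hF hbel htrust⟩
  generalize hl : w ++ [bl] = l at h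
  cases h with
  | nil => simp at hl
  | snoc hw hF hbel htrust =>
    obtain ⟨rfl, hbl⟩ := List.append_inj' hl rfl
    obtain rfl := List.singleton_inj.1 hbl
    exact ⟨hw, hF, hbel, htrust⟩

namespace IsState

theorem maximalConsistent (hF0 : MaximalConsistent F0) (hw : IsState T0 F0 w) :
    MaximalConsistent (cF F0 w) := by
  cases hw with
  | nil => exact hF0
  | snoc _ hF => rwa [cF_append_singleton]

theorem imp_bel_cTrust_mem (hw : IsState T0 F0 w) : imp (bel (cTrust T0 w) X φ) φ ∈ cF F0 w := by
  cases hw with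
  | nil h => exact h X φ
  | snoc _ _ _ h => rw [cF_append_singleton, cTrust_append_singleton]; exact h X φ

theorem append_singleton (hF0 : MaximalConsistent F0) (hw : IsState T0 F0 w)
    {F : Set (Formula P V A)} (hF : MaximalConsistent F) (hwF : {ψ | bel T X ψ ∈ cF F0 w} ⊆ F)
    (b : B) : IsState T0 F0 (w ++ [⟨X, b, T, F⟩]) :=
  have hm := hw.maximalConsistent hF0
  .snoc hw hF (fun _ hψ => hwF (hm.mem_of_thm_imp (.monoB T.empty_subset subset_rfl) hψ))
    fun _ _ => hwF (hm.mem_of_thm .trust)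

theorem bel_mem_append_iff (hF0 : MaximalConsistent F0) (h : IsState T0 F0 (w ++ u))
    (hX : ∀ bl ∈ u, X ⊆ bl.X) : bel T X φ ∈ cF F0 w ↔ bel T X φ ∈ cF F0 (w ++ u) := by
  induction u using List.reverseRecOn with
  | nil => rw [List.append_nil]
  | append_singleton u bl ih =>
    rw [← List.append_assoc] at h ⊢
    obtain ⟨hwu, hF, hbel, -⟩ := isState_append_singleton_iff.1 h
    rw [List.forall_mem_append, List.forall_mem_singleton] at hX
    rw [ih hwu hX.1, cF_append_singleton]
    exact (hwu.maximalConsistent hF0).bel_mem_iff_of_subset hF hX.2 hbel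

theorem bel_mem_iff_of_csim (hF0 : MaximalConsistent F0) (hw : IsState T0 F0 w)
    (hu : IsState T0 F0 u) (h : csim X w u) : bel T X φ ∈ cF F0 w ↔ bel T X φ ∈ cF F0 u := by
  obtain ⟨c, d, e, rfl, rfl, hpath⟩ := exists_append_eq_pathBlocks w u
  rw [csim_iff, hpath, List.forall_mem_append] at h
  exact (bel_mem_append_iff hF0 hw h.1).symm.trans (bel_mem_append_iff hF0 hu h.2)

theorem mem_of_bel_mem (hF0 : MaximalConsistent F0) (hw : IsState T0 F0 w)
    (hu : IsState T0 F0 u) (h : bel T X φ ∈ cF F0 w) (hwu : csim X w u)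
    (hT : T ⊆ cTrust T0 u) : φ ∈ cF F0 u :=
  have hm := hu.maximalConsistent hF0
  hm.mp_mem hu.imp_bel_cTrust_mem
    (hm.mem_of_thm_imp (.monoB hT subset_rfl) ((bel_mem_iff_of_csim hF0 hw hu hwu).1 h))

end IsState

end CanonicalStates

section CanonicalGame

variable {T0 : Set V} {F0 : Set (Formula P V A)} {C : Set A} {T X : Set V} {φ : Formula P V A}
  {w : CState T0 F0 B}

theorem exists_state_of_bel_notMem [Nonempty B] (hF0 : MaximalConsistent F0)
    (h : bel T X φ ∉ cF F0 w.1) :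
    ∃ u : CState T0 F0 B, csim X w.1 u.1 ∧ T ⊆ cTrust T0 u.1 ∧ φ ∉ cF F0 u.1 := by
  obtain ⟨G, hG, hwG, hφ⟩ := (w.2.maximalConsistent hF0).exists_of_bel_notMem h
  refine ⟨⟨_, w.2.append_singleton hF0 hG hwG (Classical.arbitrary B)⟩,
    csim_append_singleton subset_rfl, ?_, ?_⟩
  · rw [cTrust_append_singleton]
  · rwa [cF_append_singleton]

theorem mech_of_votes {u v : CState T0 F0 B} {δ : A → Formula P V A × CState T0 F0 B}
    (hF0 : MaximalConsistent F0) (hT : cTrust T0 u.1 ⊆ T)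
    (hempty : {ψ | str ∅ T Set.univ ψ ∈ cF F0 u.1} ⊆ cF F0 v.1)
    (hvotes : {ψ | str {a ∈ C | (δ a).1 = ψ} T X ψ ∈ cF F0 u.1} ⊆ cF F0 v.1)
    (hsim : ∀ a ∈ C, ∀ Y, csim Y u.1 (δ a).2.1 → Y ⊆ X)
    (hout : ∀ a ∉ C, (δ a).1 ∈ cF F0 v.1) : Mech T0 F0 u δ v := by
  intro C' T' Y ψ hψ hvote hY hT' _
  have hm := u.2.maximalConsistent hF0
  by_cases hC' : C' ⊆ C
  · rcases C'.eq_empty_or_nonempty with rfl | ⟨a, ha⟩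
    · exact hempty (hm.mem_of_thm_imp (.monoS (hT'.trans hT) Y.subset_univ subset_rfl) hψ)
    · exact hvotes (hm.mem_of_thm_imp (.monoS (hT'.trans hT) (hsim a (hC' ha) Y (hY a ha))
        fun a ha => ⟨hC' ha, hvote a ha⟩) hψ)
  · obtain ⟨a, ha, haC⟩ := Set.not_subset.1 hC'
    exact hvote a ha ▸ hout a haC

theorem exists_mech_of_str_notMem (hF0 : MaximalConsistent F0)
    (hAB : Cardinal.mk A < Cardinal.mk B) (h : str C T X φ ∉ cF F0 w.1)
    {δ : A → Formula P V A × CState T0 F0 B} (hδ : ∀ a ∉ C, Thm (δ a).1) :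
    ∃ u v : CState T0 F0 B, csim X w.1 u.1 ∧ T ⊆ cTrust T0 u.1 ∧ Mech T0 F0 u δ v ∧
      T ⊆ cTrust T0 v.1 ∧ φ ∉ cF F0 v.1 := by
  obtain ⟨G, H, hG, hH, hwG, hempty, hvotes, hφ⟩ :=
    (w.2.maximalConsistent hF0).exists_pair_of_str_notMem
      (D := fun ψ => {a ∈ C | (δ a).1 = ψ}) h
      (fun _ _ hne => Set.disjoint_left.2 fun _ ha ha' => hne (ha.2.symm.trans ha'.2))
      fun _ => Set.sep_subset _ _
  obtain ⟨b, hb⟩ := exists_forall_not_prefix hAB (f := fun b => (⟨X, b, T, G⟩ : Block P V A B))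
    (fun _ _ => congrArg Block.b) w.1 fun a => (δ a).2.1
  have hu := w.2.append_singleton hF0 hG hwG b
  have huH : {ψ | bel T ∅ ψ ∈ cF F0 (w.1 ++ [⟨X, b, T, G⟩])} ⊆ H := by
    simp only [cF_append_singleton]
    exact fun _ hψ => hempty (hG.mem_of_thm_imp .bel_empty_imp_str_empty hψ)
  refine ⟨⟨_, hu⟩, ⟨_, hu.append_singleton hF0 hH huH b⟩, csim_append_singleton subset_rfl,
    ?_, mech_of_votes (C := C) (T := T) (X := X) hF0 ?_ ?_ ?_ ?_ ?_, ?_, ?_⟩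
  all_goals simp only [cTrust_append_singleton, cF_append_singleton]
  · exact subset_rfl
  · exact subset_rfl
  · exact hempty
  · exact hvotes
  · exact fun a _ Y hY => csim_iff.1 hY _ (mem_pathBlocks_of_not_prefix (hb a))
  · exact fun a ha => hH.mem_of_thm (hδ a ha)
  · exact subset_rfl
  · exact hφ

theorem exists_profile_extending (φ : Formula P V A) (w : CState T0 F0 B)
    (s : {a // a ∈ C} → Formula P V A × CState T0 F0 B) :
    ∃ δ : A → Formula P V A × CState T0 F0 B,
      (∀ a (ha : a ∈ C), s ⟨a, ha⟩ = δ a) ∧ ∀ a ∉ C, Thm (δ a).1 :=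
  ⟨fun a => if ha : a ∈ C then s ⟨a, ha⟩ else (imp φ φ, w), fun a ha => by simp only [dif_pos ha],
    fun a ha => by simpa only [dif_neg ha] using Thm.imp_self⟩

theorem mem_of_str_mem_of_mech (hF0 : MaximalConsistent F0) (h : str C T X φ ∈ cF F0 w.1)
    {u v : CState T0 F0 B} {δ : A → Formula P V A × CState T0 F0 B} (hwu : csim X w.1 u.1)
    (hTu : T ⊆ cTrust T0 u.1) (hδ : ∀ a ∈ C, δ a = (φ, w)) (hM : Mech T0 F0 u δ v)
    (hTv : T ⊆ cTrust T0 v.1) : φ ∈ cF F0 v.1 := by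
  have hu : str C T X φ ∈ cF F0 u.1 := w.2.mem_of_bel_mem hF0 u.2
    ((w.2.maximalConsistent hF0).mem_of_thm_imp .strIntro₁ h) hwu hTu
  exact hM C T X φ hu (fun a ha => by rw [hδ a ha])
    (fun a ha => by rw [hδ a ha]; exact csim_symm hwu) hTu hTv

end CanonicalGame

end

/-- Truth lemma: for each state w of the canonical game and each formula φ,
w ⊨ φ iff φ ∈ F(w). -/
theorem truth_lemma {P V A B : Type}
    (T0 : Set V) (F0 : Set (Formula P V A))
    (hF0 : MaximalConsistent F0) (hB : Cardinal.mk A < Cardinal.mk B)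
    (w : CState T0 F0 B) (φ : Formula P V A) :
    CSat T0 F0 φ w ↔ φ ∈ cF F0 w.1 := by
  have hm (w : CState T0 F0 B) := w.2.maximalConsistent hF0
  have : Nonempty B := Cardinal.mk_ne_zero_iff.1 hB.ne_bot
  induction φ generalizing w with
  | atom p => rfl
  | neg φ ih => exact (not_congr (ih w)).trans (hm w).neg_mem_iff.symm
  | imp φ ψ ihφ ihψ => exact (imp_congr (ihφ w) (ihψ w)).trans (hm w).imp_mem_iff.symm
  | bel T X φ ih =>
    simp only [CSat, ih]
    refine ⟨fun h => ?_, fun h u => w.2.mem_of_bel_mem hF0 u.2 h⟩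
    by_contra hn
    obtain ⟨u, hwu, hTu, hφ⟩ := exists_state_of_bel_notMem hF0 hn
    exact hφ (h u hwu hTu)
  | str C T X φ ih =>
    simp only [CSat, ih]
    refine ⟨fun ⟨s, h⟩ => ?_, fun h => ⟨fun _ => (φ, w), fun u v δ hwu hTu hδ =>
      mem_of_str_mem_of_mech hF0 h hwu hTu fun a ha => (hδ a ha).symm⟩⟩
    by_contra hn
    obtain ⟨δ, hsδ, hδ⟩ := exists_profile_extending φ w s
    obtain ⟨u, v, hwu, hTu, hM, hTv, hφ⟩ := exists_mech_of_str_notMem hF0 hB hn hδ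
    exact hφ (h u v δ hwu hTu hsδ hM hTv)
end

section
/- Soundness of the Cooperation axiom: For any game, any state w, any formulae φ, ψ ∈ Φ, any datasets T, X ⊆ V, and any coalitions C, D ⊆ 𝒜, if w ⊨ [C]^T_X(φ→ψ), w ⊨ [D]^T_X φ, and C and D are disjoint, then w ⊨ [C∪D]^T_X ψ. -/
variable {P V A : Type}

variable {B : Type}

attribute [local instance] Classical.propDecidable

theorem exists_union_extension_of_disjoint {α β : Type*} {C D : Set α} (hCD : Disjoint C D)
    (f : C → β) (g : D → β) :
    ∃ k : ↥(C ∪ D) → β,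
      k ∘ Set.inclusion Set.subset_union_left = f ∧
        k ∘ Set.inclusion Set.subset_union_right = g := by
  refine ⟨Sum.elim f g ∘ Equiv.Set.union hCD, ?_, ?_⟩
  · funext a
    exact congrArg (Sum.elim f g) (Equiv.Set.union_apply_left hCD a.2)
  · funext a
    exact congrArg (Sum.elim f g) (Equiv.Set.union_apply_right hCD a.2)

namespace Game

variable {G : Game P V A} {T X : Set V} {w : G.W} {C D : Set A}

/-- The action profile `s` of the coalition `C` forces `Q` from `w`: every transition between
`T`-trustworthy states that starts `X`-indistinguishably from `w` and follows `s` ends in a state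
satisfying `Q`. This is the condition on `s` in the semantics of `[C]^T_X`, with an arbitrary
predicate on states in place of a formula. -/
def Forces (G : Game P V A) (T X : Set V) (w : G.W) (s : C → G.Δ) (Q : G.W → Prop) : Prop :=
  ∀ (u v : G.W) (δ : A → G.Δ),
    G.simSet X w u → T ⊆ G.trust u →
    (∀ (a : A) (h : a ∈ C), s ⟨a, h⟩ = δ a) →
    G.M u δ v → T ⊆ G.trust v → Q v

theorem Forces.mp {s : C → G.Δ} {Q R : G.W → Prop}
    (himp : G.Forces T X w s fun v => Q v → R v) (hQ : G.Forces T X w s Q) :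
    G.Forces T X w s R :=
  fun u v δ hu hTu hs hM hTv => himp u v δ hu hTu hs hM hTv (hQ u v δ hu hTu hs hM hTv)

theorem Forces.of_comp_inclusion {hCD : C ⊆ D} {s : D → G.Δ} {Q : G.W → Prop}
    (h : G.Forces T X w (s ∘ Set.inclusion hCD) Q) : G.Forces T X w s Q :=
  fun u v δ hu hTu hs => h u v δ hu hTu fun a ha => hs a (hCD ha)

end Game

theorem sat_str_iff {G : Game P V A} {C : Set A} {T X : Set V} {φ : Formula P V A} {w : G.W} :
    Sat G (Formula.str C T X φ) w ↔ ∃ s : C → G.Δ, G.Forces T X w s (Sat G φ) :=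
  Iff.rfl

/-- Soundness of the Cooperation axiom: if w ⊨ [C]^T_X(φ→ψ),
w ⊨ [D]^T_X φ, and C, D are disjoint, then w ⊨ [C∪D]^T_X ψ. -/
theorem cooperation_sound {P V A : Type} (G : Game P V A) (w : G.W)
    (φ ψ : Formula P V A) (T X : Set V) (C D : Set A)
    (h1 : Sat G (Formula.str C T X (Formula.imp φ ψ)) w)
    (h2 : Sat G (Formula.str D T X φ) w)
    (hCD : Disjoint C D) :
    Sat G (Formula.str (C ∪ D) T X ψ) w := by
  rw [sat_str_iff] at h1 h2 ⊢
  obtain ⟨sC, hsC⟩ := h1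
  obtain ⟨sD, hsD⟩ := h2
  obtain ⟨s, rfl, rfl⟩ := exists_union_extension_of_disjoint hCD sC sD
  have himp : G.Forces T X w s fun v => Sat G φ v → Sat G ψ v := hsC.of_comp_inclusion
  have hφ : G.Forces T X w s (Sat G φ) := hsD.of_comp_inclusion
  exact ⟨s, himp.mp hφ⟩
end

section
/- Strategic introspection with knowledge: For any formula φ ∈ Φ, any datasets T, X ⊆ V, and any coalition C ⊆ 𝒜, it holds that ⊢ [C]^T_X φ → B^∅_X [C]^T_X φ. -/
variable {P V A : Type}

variable {B : Type}

attribute [local instance] Classical.propDecidable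

namespace Thm

variable {φ ψ χ : Formula P V A} {T X : Set V}

theorem imp_trans_s17 (hφψ : Thm (Formula.imp φ ψ)) (hψχ : Thm (Formula.imp ψ χ)) :
    Thm (Formula.imp φ χ) := by
  have syllogism : Tautology (Formula.imp (Formula.imp φ ψ)
      (Formula.imp (Formula.imp ψ χ) (Formula.imp φ χ))) := by
    intro v _ v_imp
    simp only [v_imp]
    tauto
  exact ((taut syllogism).mp hφψ).mp hψχ

theorem neg_imp_comm_s17 (h : Thm (Formula.imp (Formula.neg φ) ψ)) :
    Thm (Formula.imp (Formula.neg ψ) φ) := by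
  have contraposition : Tautology (Formula.imp (Formula.imp (Formula.neg φ) ψ)
      (Formula.imp (Formula.neg ψ) φ)) := by
    intro v v_neg v_imp
    simp only [v_neg, v_imp]
    tauto
  exact (taut contraposition).mp h

theorem imp_neg_comm_s17 (h : Thm (Formula.imp φ (Formula.neg ψ))) :
    Thm (Formula.imp ψ (Formula.neg φ)) := by
  have contraposition : Tautology (Formula.imp (Formula.imp φ (Formula.neg ψ))
      (Formula.imp ψ (Formula.neg φ))) := by
    intro v v_neg v_imp
    simp only [v_neg, v_imp]
    tauto
  exact (taut contraposition).mp h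

theorem bel_of_thm (h : Thm φ) : Thm (Formula.bel T X φ) :=
  (monoB (Set.empty_subset T) (Set.empty_subset X)).mp h.nec

theorem bel_imp_bel (h : Thm (Formula.imp φ ψ)) :
    Thm (Formula.imp (Formula.bel T X φ) (Formula.bel T X ψ)) :=
  distrib.mp h.bel_of_thm

-- The S5 derivation of axiom 4, with `B^∅_X` as the knowledge modality:
-- `B^T_X φ → ¬B^∅_X ¬B^T_X φ → B^∅_X ¬B^∅_X ¬B^T_X φ → B^∅_X B^T_X φ`.
theorem bel_imp_knows_bel :
    Thm (Formula.imp (Formula.bel T X φ) (Formula.bel ∅ X (Formula.bel T X φ))) := by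
  have bel_considered_possible : Thm (Formula.imp (Formula.bel T X φ)
      (Formula.neg (Formula.bel ∅ X (Formula.neg (Formula.bel T X φ))))) :=
    truth.imp_neg_comm_s17
  have bel_of_considered_possible : Thm (Formula.imp
      (Formula.neg (Formula.bel ∅ X (Formula.neg (Formula.bel T X φ)))) (Formula.bel T X φ)) :=
    negIntro.neg_imp_comm_s17
  exact (bel_considered_possible.imp_trans_s17 negIntro).imp_trans_s17
    bel_of_considered_possible.bel_imp_bel

end Thm

/-- Strategic introspection with knowledge:
⊢ [C]^T_X φ → B^∅_X [C]^T_X φ. -/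
theorem strategic_introspection_plus {P V A : Type}
    (φ : Formula P V A) (T X : Set V) (C : Set A) :
    Thm (Formula.imp (Formula.str C T X φ)
      (Formula.bel ∅ X (Formula.str C T X φ))) := by
  have knows_bel_str : Thm (Formula.imp (Formula.str C T X φ)
      (Formula.bel ∅ X (Formula.bel T X (Formula.str C T X φ)))) :=
    Thm.strIntro₁.imp_trans_s17 Thm.bel_imp_knows_bel
  exact knows_bel_str.imp_trans_s17 Thm.strIntro₂.bel_imp_bel
end
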